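/- Let D ⊆ ℝ^d be compact and convex, and ν a probability measure with full support on D, absolutely continuous with respect to Lebesgue measure. Let ρ ∈ F_ν have finite support and suppose there exists a Laguerre diagram of D such that, for each Laguerre cell L with ν(L) > 0, ρ|_L ⪯ ν|_L and the support of ρ|_L is affinely independent. Then ρ is a Lipschitz-exposed point of F_ν. -/

import Mathlib

open MeasureTheory Set Filter Topology
open scoped ENNReal NNReal

noncomputable section

/-- Euclidean space `ℝ^d`. -/
abbrev Euc (d : ℕ) : Type := EuclideanSpace ℝ (Fin d)

/-- `ρ ⪯ μ` in the convex order: `∫ ψ dρ ≤ ∫ ψ dμ` for every convex function `ψ` for which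
both integrals exist. -/
def ConvexOrderLE {d : ℕ} (ρ μ : Measure (Euc d)) : Prop :=
  ∀ ψ : Euc d → ℝ, ConvexOn ℝ Set.univ ψ → Integrable ψ μ → Integrable ψ ρ →
    ∫ x, ψ x ∂ρ ≤ ∫ x, ψ x ∂μ

/-- The set of fusions of `ν`: probability measures supported on `D` that are dominated by `ν`
in the convex order. -/
def fusions {d : ℕ} (D : Set (Euc d)) (ν : Measure (Euc d)) : Set (Measure (Euc d)) :=
  {ρ | IsProbabilityMeasure ρ ∧ ρ Dᶜ = 0 ∧ ConvexOrderLE ρ ν}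

/-- The (topological) support of a measure. -/
def msupport {d : ℕ} (ρ : Measure (Euc d)) : Set (Euc d) := {x | ∀ U ∈ nhds x, ρ U ≠ 0}

/-- Laguerre cell of site `x_i` with weight `g_i` inside the domain `D`. -/
def LaguerreCell {d n : ℕ} (D : Set (Euc d)) (X : Fin n → Euc d) (g : Fin n → ℝ)
    (i : Fin n) : Set (Euc d) :=
  {y ∈ D | ∀ j, ‖y - X i‖ ^ 2 - g i ≤ ‖y - X j‖ ^ 2 - g j}

/-- `ρ` is a Lipschitz-exposed point of `F_ν`: there exists a Lipschitz function `Φ` on `D`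
such that `ρ` is the unique maximizer of `λ ↦ ∫ Φ dλ` over `F_ν`. -/
def IsLipschitzExposed {d : ℕ} (D : Set (Euc d)) (ν ρ : Measure (Euc d)) : Prop :=
  ρ ∈ fusions D ν ∧ ∃ (K : ℝ≥0) (Φ : Euc d → ℝ), LipschitzOnWith K Φ D ∧
    ∀ lam ∈ fusions D ν, lam ≠ ρ → ∫ y, Φ y ∂lam < ∫ y, Φ y ∂ρ


lemma aff_convexOn {d : ℕ} (f : Euc d →ᵃ[ℝ] ℝ) : ConvexOn ℝ Set.univ (fun y => f y) :=
  (convexOn_id convex_univ).comp_affineMap f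

lemma aff_lipschitz {d : ℕ} (f : Euc d →ᵃ[ℝ] ℝ) : ∃ K, LipschitzWith K (fun y => f y) := by
  refine ⟨_, LipschitzWith.of_dist_le_mul (K := ‖LinearMap.toContinuousLinearMap f.linear‖₊) ?_⟩
  intro x y
  have h : f x - f y = LinearMap.toContinuousLinearMap f.linear (x - y) := by
    have := f.linearMap_vsub x y
    simpa using this.symm
  rw [Real.dist_eq, h, dist_eq_norm]
  exact (LinearMap.toContinuousLinearMap f.linear).le_opNorm (x - y)

lemma aff_continuous {d : ℕ} (f : Euc d →ᵃ[ℝ] ℝ) : Continuous (fun y => f y) :=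
  (aff_lipschitz f).choose_spec.continuous

lemma integrable_of_cont {d : ℕ} {D : Set (Euc d)} (hD : IsCompact D) (μ : Measure (Euc d))
    [IsFiniteMeasure μ] (hμ : μ Dᶜ = 0) {f : Euc d → ℝ} (hf : Continuous f) :
    Integrable f μ := by
  have h := hf.continuousOn.integrableOn_compact (μ := μ) hD
  rwa [IntegrableOn, Measure.restrict_eq_self_of_ae_mem (s := D) (by simpa [mem_ae_iff] using hμ)] at h

lemma cell_key {d : ℕ} {D : Set (Euc d)} (hD : IsCompact D) (ν lam : Measure (Euc d))
    [IsProbabilityMeasure ν] [IsProbabilityMeasure lam] (hν : ν Dᶜ = 0) (hlam : lam Dᶜ = 0)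
    (hle : ConvexOrderLE lam ν) (p : Euc d → ℝ) (hpc : Continuous p)
    (hpconv : ConvexOn ℝ Set.univ p) (hp : ∫ y, p y ∂ν ≤ ∫ y, p y ∂lam)
    (a b : Euc d →ᵃ[ℝ] ℝ) (hap : ∀ y, a y ≤ p y) (hb : ∀ y ∈ D, 0 ≤ b y)
    (L : Set (Euc d)) (hL : MeasurableSet L) (hLD : ∀ y ∈ D, y ∈ L ↔ a y = p y) :
    ∫ y in L, b y ∂lam ≤ ∫ y in L, b y ∂ν := by
  let F : ℕ → Euc d → ℝ := fun n y => max 0 (((n : ℝ) + 1) * (a y - p y) + b y)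
  have hFc : ∀ n, Continuous (F n) := by
    intro n
    have := aff_continuous a
    have := aff_continuous b
    fun_prop
  have key : ∀ n, ∫ y, F n y ∂lam ≤ ∫ y, F n y ∂ν := by
    intro n
    have hn : (0 : ℝ) < (n : ℝ) + 1 := by positivity
    let q : Euc d → ℝ := p ⊔ fun y => (a + ((n : ℝ) + 1)⁻¹ • b) y
    have hqconv : ConvexOn ℝ Set.univ q := hpconv.sup (aff_convexOn _)
    have hqc : Continuous q := hpc.sup (aff_continuous _)
    have hFq : ∀ y, F n y = ((n : ℝ) + 1) * (q y - p y) := by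
      intro y
      simp only [F, q, Pi.sup_apply, AffineMap.coe_add, AffineMap.coe_smul, Pi.add_apply,
        Pi.smul_apply, smul_eq_mul]
      rcases le_total (p y) (a y + ((n : ℝ) + 1)⁻¹ * b y) with h | h
      · rw [sup_eq_right.2 h]
        have : ((n : ℝ) + 1) * (a y - p y) + b y
            = ((n : ℝ) + 1) * (a y + ((n : ℝ) + 1)⁻¹ * b y - p y) := by
          field_simp
          ring
        rw [this, max_eq_right]
        exact mul_nonneg hn.le (by linarith)
      · rw [sup_eq_left.2 h]
        have : ((n : ℝ) + 1) * (a y - p y) + b y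
            = ((n : ℝ) + 1) * (a y + ((n : ℝ) + 1)⁻¹ * b y - p y) := by
          field_simp
          ring
        rw [this, max_eq_left]
        · ring
        · exact mul_nonpos_of_nonneg_of_nonpos hn.le (by linarith)
    have h := hle q hqconv (integrable_of_cont hD ν hν hqc) (integrable_of_cont hD lam hlam hqc)
    simp_rw [hFq]
    rw [integral_const_mul, integral_const_mul,
      integral_sub (integrable_of_cont hD ν hν hqc) (integrable_of_cont hD ν hν hpc),
      integral_sub (integrable_of_cont hD lam hlam hqc) (integrable_of_cont hD lam hlam hpc)]
    exact mul_le_mul_of_nonneg_left (by linarith) hn.le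
  have lim : ∀ μ : Measure (Euc d), IsProbabilityMeasure μ → μ Dᶜ = 0 →
      Tendsto (fun n => ∫ y, F n y ∂μ) atTop (𝓝 (∫ y in L, b y ∂μ)) := by
    intro μ _ hμ
    rw [← integral_indicator hL]
    refine tendsto_integral_of_dominated_convergence (fun y => |b y|)
      (fun n => (hFc n).aestronglyMeasurable)
      (integrable_of_cont hD μ hμ (aff_continuous b).abs) ?_ ?_
    · intro n
      refine Eventually.of_forall fun y => ?_
      have h1 : ((n : ℝ) + 1) * (a y - p y) ≤ 0 :=
        mul_nonpos_of_nonneg_of_nonpos (by positivity) (by linarith [hap y])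
      rw [Real.norm_of_nonneg (le_max_left _ _)]
      exact max_le (abs_nonneg _) (by linarith [le_abs_self (b y)])
    · have hae : ∀ᵐ y ∂μ, y ∈ D := by simpa [mem_ae_iff] using hμ
      filter_upwards [hae] with y hy
      by_cases hyL : y ∈ L
      · have h1 := (hLD y hy).1 hyL
        rw [indicator_of_mem hyL]
        have : ∀ n, F n y = b y := by
          intro n
          simp [F, h1, hb y hy]
        simp [this]
      · have h1 : a y < p y := lt_of_le_of_ne (hap y) (fun h => hyL ((hLD y hy).2 h))
        rw [indicator_of_notMem hyL]
        apply tendsto_const_nhds.congr'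
        obtain ⟨N, hN⟩ := exists_nat_gt (b y / (p y - a y))
        filter_upwards [eventually_ge_atTop N] with n hn
        have hn' : (N : ℝ) ≤ n := by exact_mod_cast hn
        have h2 : b y < N * (p y - a y) := (div_lt_iff₀ (by linarith)).1 hN
        symm
        apply max_eq_left
        nlinarith
  exact le_of_tendsto_of_tendsto' (lim lam inferInstance hlam) (lim ν inferInstance hν) key

lemma null_hyper {d : ℕ} (u v : Euc d) (huv : u ≠ v) (c c' : ℝ) :
    (volume : Measure (Euc d)) {y | 2 * inner ℝ u y + c = 2 * inner ℝ v y + c'} = 0 := by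
  let S : AffineSubspace ℝ (Euc d) :=
    { carrier := {y | 2 * inner ℝ u y + c = 2 * inner ℝ v y + c'}
      smul_vsub_vadd_mem' := by
        intro t p q r hp hq hr
        simp only [mem_setOf_eq, vsub_eq_sub, vadd_eq_add, inner_add_right, inner_smul_right,
          inner_sub_right] at *
        linear_combination t * hp - t * hq + hr }
  have hS : S ≠ ⊤ := by
    intro h
    have hall : ∀ y : Euc d, 2 * inner ℝ u y + c = 2 * inner ℝ v y + c' := by
      intro y
      have : y ∈ S := by rw [h]; trivial
      exact this
    apply huv
    have h0 := hall 0
    have h1 := hall (u - v)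
    simp only [inner_zero_right] at h0
    have : inner ℝ (u - v) (u - v) = 0 := by
      rw [inner_sub_left]
      linarith
    exact sub_eq_zero.1 (inner_self_eq_zero.1 this)
  exact Measure.addHaar_affineSubspace volume S hS

lemma aff_coord {d : ℕ} {T : Set (Euc d)} (hT : AffineIndependent ℝ (fun x : T => (x : Euc d)))
    {s : Euc d} (hs : s ∈ T) :
    ∃ b : Euc d →ᵃ[ℝ] ℝ, b s = 1 ∧ ∀ t ∈ T, t ≠ s → b t = 0 := by
  obtain ⟨t, hst, hti, htt⟩ := exists_subset_affineIndependent_affineSpan_eq_top hT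
  let B : AffineBasis t ℝ (Euc d) := ⟨fun p => p, hti, by simpa using htt⟩
  refine ⟨B.coord ⟨s, hst hs⟩, ?_, ?_⟩
  · exact B.coord_apply_eq ⟨s, hst hs⟩
  · intro x hx hxs
    refine B.coord_apply_ne (i := ⟨s, hst hs⟩) (j := ⟨x, hst hx⟩) ?_
    intro h
    exact hxs (congrArg Subtype.val h).symm

lemma aff_order_eq {d : ℕ} {D : Set (Euc d)} (hD : IsCompact D) (ν ρ : Measure (Euc d))
    [IsProbabilityMeasure ν] [IsProbabilityMeasure ρ] (hν : ν Dᶜ = 0) (hρ : ρ Dᶜ = 0)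
    (L : Set (Euc d)) (h : ConvexOrderLE (ρ.restrict L) (ν.restrict L)) (b : Euc d →ᵃ[ℝ] ℝ) :
    ∫ y in L, b y ∂ρ = ∫ y in L, b y ∂ν := by
  have i1 := (integrable_of_cont hD ν hν (aff_continuous b)).restrict (s := L)
  have i2 := (integrable_of_cont hD ρ hρ (aff_continuous b)).restrict (s := L)
  have h1 := h _ (aff_convexOn b) i1 i2
  have h2 := h (fun y => (-b) y) (aff_convexOn (-b)) (by simpa using i1.neg)
    (by simpa using i2.neg)
  simp only [AffineMap.coe_neg, Pi.neg_apply, integral_neg] at h2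
  linarith

/-- a point of a finite support is an atom -/
lemma atom_of_finite {d : ℕ} (ρ : Measure (Euc d)) (hS : ρ (msupport ρ)ᶜ = 0)
    (hfin : (msupport ρ).Finite) {s : Euc d} (hs : s ∈ msupport ρ) : ρ {s} ≠ 0 := by
  have hU : (msupport ρ \ {s})ᶜ ∈ 𝓝 s :=
    (hfin.subset diff_subset).isClosed.isOpen_compl.mem_nhds (by simp)
  intro h0
  apply hs _ hU
  refine measure_mono_null (t := (msupport ρ)ᶜ ∪ {s}) ?_ (measure_union_null hS h0)
  intro y hy
  by_cases h : y = s
  · exact Or.inr h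
  · exact Or.inl fun h' => hy ⟨h', h⟩

lemma msupport_compl {d : ℕ} (ρ : Measure (Euc d)) : ρ (msupport ρ)ᶜ = 0 := by
  have : msupport ρ = ρ.support := by
    ext x
    simp [msupport, Measure.mem_support_iff_forall, pos_iff_ne_zero]
  rw [this]
  exact Measure.measure_compl_support

lemma integral_on_atoms {d : ℕ} (μ : Measure (Euc d)) {S L : Set (Euc d)} (hS : μ Sᶜ = 0)
    (hL : MeasurableSet L) {s : Euc d} (hsL : s ∈ L) (b : Euc d → ℝ) (hbs : b s = 1)
    (hb : ∀ t ∈ S ∩ L, t ≠ s → b t = 0) : ∫ y in L, b y ∂μ = μ.real {s} := by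
  rw [← integral_indicator hL, ← integral_indicator_one (measurableSet_singleton s)]
  apply integral_congr_ae
  have hae : ∀ᵐ y ∂μ, y ∈ S := by simpa [mem_ae_iff] using hS
  filter_upwards [hae] with y hy
  by_cases h : y = s
  · subst h
    simp [hsL, hbs]
  · by_cases hyL : y ∈ L
    · simp [hyL, h, hb y ⟨hy, hyL⟩ h]
    · simp [hyL, h]

lemma eq_of_atoms {d : ℕ} (μ ρ : Measure (Euc d)) [IsProbabilityMeasure μ]
    [IsProbabilityMeasure ρ] {S : Set (Euc d)} (hfin : S.Finite) (hμ : μ Sᶜ = 0) (hρ : ρ Sᶜ = 0)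
    (h : ∀ s ∈ S, μ.real {s} = ρ.real {s}) : μ = ρ := by
  have h1 : μ.restrict S = μ :=
    Measure.restrict_eq_self_of_ae_mem (s := S) (by simpa [mem_ae_iff] using hμ)
  have h2 : ρ.restrict S = ρ :=
    Measure.restrict_eq_self_of_ae_mem (s := S) (by simpa [mem_ae_iff] using hρ)
  rw [← h1, ← h2, ← biUnion_of_singleton S]
  rw [Measure.restrict_biUnion_congr hfin.countable]
  intro s hs
  rw [Measure.restrict_singleton, Measure.restrict_singleton]
  congr 1
  exact (measureReal_eq_measureReal_iff).1 (h s hs)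

lemma sum_cells {d n : ℕ} (μ : Measure (Euc d)) (J : Finset (Fin n)) (L : Fin n → Set (Euc d))
    (hL : ∀ i, MeasurableSet (L i)) (f : Euc d → ℝ) (hf : Integrable f μ) :
    ∑ i ∈ J, ∫ y in L i, f y ∂μ = ∫ y, ∑ i ∈ J, (L i).indicator f y ∂μ := by
  rw [integral_finset_sum J (fun i _ => hf.indicator (hL i))]
  exact Finset.sum_congr rfl fun i _ => (integral_indicator (hL i)).symm

/-- if `ρ ∈ F_ν` has finite support and there is a Laguerre diagram of `D`
such that for each cell `L` with `ν(L) > 0` one has `ρ|_L ⪯ ν|_L` and the support of `ρ|_L` is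
affinely independent, then `ρ` is a Lipschitz-exposed point of `F_ν`. -/
theorem lipschitz_exposed_of_laguerre_affineIndependent
    {d : ℕ} (D : Set (Euc d)) (hD : IsCompact D) (hDconv : Convex ℝ D)
    (ν : Measure (Euc d)) [IsProbabilityMeasure ν] (hνD : ν Dᶜ = 0)
    (hfull : msupport ν = D)
    (hac : ν ≪ (volume : Measure (Euc d)))
    (ρ : Measure (Euc d)) (hρ : ρ ∈ fusions D ν)
    (hfin : (msupport ρ).Finite)
    (hLag : ∃ (n : ℕ) (X : Fin n → Euc d) (g : Fin n → ℝ), 0 < n ∧ Function.Injective X ∧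
      ∀ i, 0 < ν (LaguerreCell D X g i) →
        ConvexOrderLE (ρ.restrict (LaguerreCell D X g i))
          (ν.restrict (LaguerreCell D X g i)) ∧
        AffineIndependent ℝ
          (fun x : msupport (ρ.restrict (LaguerreCell D X g i)) => (x : Euc d))) :
    IsLipschitzExposed D ν ρ := by
  have hρ0 := hρ
  obtain ⟨hρP, hρD, hρle⟩ := hρ
  refine ⟨hρ0, ?_⟩
  obtain ⟨n, X, g, hn, hX, hcell⟩ := hLag
  haveI : Nonempty (Fin n) := ⟨⟨0, hn⟩⟩
  let A : Fin n → (Euc d →ᵃ[ℝ] ℝ) := fun i =>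
    ((2 : ℝ) • (innerSL ℝ (X i)).toLinearMap).toAffineMap
      + AffineMap.const ℝ _ (g i - ‖X i‖ ^ 2)
  have hA : ∀ i y, A i y = 2 * inner ℝ (X i) y + (g i - ‖X i‖ ^ 2) := by
    intro i y
    simp [A]
  let L : Fin n → Set (Euc d) := LaguerreCell D X g
  let p : Euc d → ℝ := Finset.univ.sup' Finset.univ_nonempty (fun i y => A i y)
  have hpmem : ∀ y, ∃ i, p y = A i y := by
    intro y
    obtain ⟨i, -, hi⟩ := Finset.exists_mem_eq_sup' (Finset.univ_nonempty (α := Fin n))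
      (fun i => A i y)
    exact ⟨i, by simp only [p, Finset.sup'_apply]; exact hi⟩
  have hAp : ∀ i y, A i y ≤ p y := by
    intro i y
    simp only [p, Finset.sup'_apply]
    exact Finset.le_sup' (fun i => A i y) (Finset.mem_univ i)
  have hpconv : ConvexOn ℝ Set.univ p :=
    Finset.sup'_induction _ _ (fun a ha b hb => ha.sup hb) (fun i _ => aff_convexOn (A i))
  have hplip : ∃ K, LipschitzWith K p :=
    Finset.sup'_induction (p := fun f : Euc d → ℝ => ∃ K, LipschitzWith K f) _ _
      (fun a ha b hb => ⟨_, ha.choose_spec.max hb.choose_spec⟩) (fun i _ => aff_lipschitz (A i))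
  obtain ⟨K, hK⟩ := hplip
  have hpc : Continuous p := hK.continuous
  have hLD : ∀ i, ∀ y ∈ D, y ∈ L i ↔ A i y = p y := by
    intro i y hy
    have hexp : ∀ j, ‖y - X j‖ ^ 2 - g j = ‖y‖ ^ 2 - A j y := by
      intro j
      rw [hA, norm_sub_sq_real, real_inner_comm]
      ring
    have : y ∈ L i ↔ ∀ j, A j y ≤ A i y := by
      simp only [L, LaguerreCell, mem_setOf_eq, hy, true_and, hexp]
      exact forall_congr' fun j => sub_le_sub_iff_left _
    rw [this]
    constructor
    · intro h
      obtain ⟨j, hj⟩ := hpmem y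
      exact le_antisymm (hAp i y) (hj ▸ h j)
    · intro h j
      rw [h]
      exact hAp j y
  have hLsub : ∀ i, L i ⊆ D := fun i y hy => hy.1
  have hLclosed : ∀ i, IsClosed (L i) := by
    intro i
    have : L i = D ∩ {y | A i y = p y} := by
      ext y
      constructor
      · intro h
        exact ⟨hLsub i h, (hLD i y (hLsub i h)).1 h⟩
      · rintro ⟨h1, h2⟩
        exact (hLD i y h1).2 h2
    rw [this]
    exact hD.isClosed.inter (isClosed_eq (aff_continuous _) hpc)
  have hLm : ∀ i, MeasurableSet (L i) := fun i => (hLclosed i).measurableSet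
  classical
  let J : Finset (Fin n) := Finset.univ.filter fun i => 0 < ν (L i)
  have hJ : ∀ i ∈ J, 0 < ν (L i) := fun i hi => (Finset.mem_filter.1 hi).2
  -- the cells of positive mass cover
  have hcover : ∀ y ∈ D, ∃ i ∈ J, y ∈ L i := by
    intro y hy
    by_contra hcon
    push Not at hcon
    have hcl : IsClosed (⋃ i ∈ J, L i) :=
      J.finite_toSet.isClosed_biUnion fun i _ => hLclosed i
    have hy' : y ∈ msupport ν := hfull ▸ hy
    refine hy' (⋃ i ∈ J, L i)ᶜ (hcl.isOpen_compl.mem_nhds (by simpa using hcon)) ?_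
    have h0 : ν (⋃ i ∈ (Finset.univ.filter fun i => ¬ 0 < ν (L i)), L i) = 0 := by
      refine (measure_biUnion_null_iff (Finset.countable_toSet _)).2 ?_
      intro i hi
      have := (Finset.mem_filter.1 hi).2
      simpa using this
    refine measure_mono_null ?_ (measure_union_null hνD h0)
    intro z hz
    by_cases hzD : z ∈ D
    · right
      obtain ⟨i, hi⟩ := hpmem z
      have hzi : z ∈ L i := (hLD i z hzD).2 hi.symm
      refine mem_biUnion (x := i) ?_ hzi
      refine Finset.mem_coe.2 (Finset.mem_filter.2 ⟨Finset.mem_univ _, fun hpos => ?_⟩)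
      exact hz (mem_biUnion (x := i)
        (Finset.mem_coe.2 (Finset.mem_filter.2 ⟨Finset.mem_univ _, hpos⟩)) hzi)
    · exact Or.inl hzD
  have hνae : ∀ᵐ y ∂ν, y ∈ D := by simpa [mem_ae_iff] using hνD
  have hdisj : ∀ᵐ y ∂ν, ∀ i j, i ≠ j → ¬ (y ∈ L i ∧ y ∈ L j) := by
    rw [ae_all_iff]
    intro i
    rw [ae_all_iff]
    intro j
    by_cases hij : i = j
    · simp [hij]
    · have h0 := hac (null_hyper (X i) (X j) (fun h => hij (hX h)) (g i - ‖X i‖ ^ 2)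
        (g j - ‖X j‖ ^ 2))
      have h1 : ∀ᵐ y ∂ν, ¬ (2 * inner ℝ (X i) y + (g i - ‖X i‖ ^ 2)
          = 2 * inner ℝ (X j) y + (g j - ‖X j‖ ^ 2)) := by
        rw [ae_iff]
        simpa using h0
      filter_upwards [h1] with y hy _ hmem
      apply hy
      rw [← hA, ← hA, (hLD i y (hLsub i hmem.1)).1 hmem.1, (hLD j y (hLsub j hmem.2)).1 hmem.2]
  have hsumν : ∀ f : Euc d → ℝ, Continuous f →
      ∑ i ∈ J, ∫ y in L i, f y ∂ν = ∫ y, f y ∂ν := by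
    intro f hf
    rw [sum_cells ν J L hLm f (integrable_of_cont hD ν hνD hf)]
    apply integral_congr_ae
    filter_upwards [hνae, hdisj] with y hy hdis
    obtain ⟨i, hiJ, hi⟩ := hcover y hy
    rw [Finset.sum_eq_single_of_mem i hiJ, indicator_of_mem hi]
    intro j _ hji
    exact indicator_of_notMem (fun hj => hdis j i hji ⟨hj, hi⟩) _
  have hsumle : ∀ μ : Measure (Euc d), IsProbabilityMeasure μ → μ Dᶜ = 0 →
      ∀ f : Euc d → ℝ, Continuous f → (∀ y ∈ D, 0 ≤ f y) →
      ∫ y, f y ∂μ ≤ ∑ i ∈ J, ∫ y in L i, f y ∂μ := by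
    intro μ _ hμ f hf hf0
    have hfi := integrable_of_cont hD μ hμ hf
    rw [sum_cells μ J L hLm f hfi]
    have hae : ∀ᵐ y ∂μ, y ∈ D := by simpa [mem_ae_iff] using hμ
    refine integral_mono_ae hfi
      (integrable_finset_sum J fun i _ => hfi.indicator (hLm i)) ?_
    filter_upwards [hae] with y hy
    obtain ⟨i, hiJ, hi⟩ := hcover y hy
    have h1 : f y = (L i).indicator f y := (indicator_of_mem hi f).symm
    rw [h1]
    refine Finset.single_le_sum (f := fun i => (L i).indicator f y) (fun j _ => ?_) hiJ
    exact indicator_apply_nonneg fun _ => hf0 y hy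
  have hbdd : ∀ f : Euc d → ℝ, Continuous f → ∃ C, ∀ y ∈ D, f y ≤ C := by
    intro f hf
    obtain ⟨C, hC⟩ := hD.bddAbove_image hf.continuousOn
    exact ⟨C, fun y hy => hC ⟨y, hy, rfl⟩⟩
  -- rho attains the integral of p
  have hρp : ∫ y, p y ∂ν ≤ ∫ y, p y ∂ρ := by
    obtain ⟨C, hC⟩ := hbdd p hpc
    have h1 := hsumle ρ hρP hρD (fun y => C - p y) (by fun_prop)
      (fun y hy => sub_nonneg.2 (hC y hy))
    have h2 := hsumν (fun y => C - p y) (by fun_prop)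
    have h3 : ∑ i ∈ J, ∫ y in L i, (C - p y) ∂ρ = ∑ i ∈ J, ∫ y in L i, (C - p y) ∂ν := by
      refine Finset.sum_congr rfl fun i hi => ?_
      have h4 := aff_order_eq hD ν ρ hνD hρD (L i) (hcell i (hJ i hi)).1
        (AffineMap.const ℝ _ C - A i)
      have h5 : ∀ μ : Measure (Euc d), ∫ y in L i, (C - p y) ∂μ
          = ∫ y in L i, (AffineMap.const ℝ (Euc d) C - A i) y ∂μ := by
        intro μ
        refine setIntegral_congr_fun (hLm i) fun y hy => ?_
        simp [(hLD i y (hLsub i hy)).1 hy]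
      rw [h5, h5, h4]
    rw [h3, h2, integral_sub (integrable_const _) (integrable_of_cont hD ρ hρD hpc),
      integral_sub (integrable_const _) (integrable_of_cont hD ν hνD hpc)] at h1
    simp only [integral_const, probReal_univ, one_smul] at h1
    linarith
  -- uniqueness
  set S := msupport ρ with hSdef
  have hSρ : ρ Sᶜ = 0 := msupport_compl ρ
  have hSne : S.Nonempty := by
    by_contra h
    rw [not_nonempty_iff_eq_empty] at h
    rw [h] at hSρ
    simp at hSρ
  have hSclosed : IsClosed S := hfin.isClosed
  have hSD : S ⊆ D := by
    intro s hs
    by_contra hsD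
    exact hs Dᶜ (hD.isClosed.isOpen_compl.mem_nhds hsD) hρD
  have huniq : ∀ lam ∈ fusions D ν, lam Sᶜ = 0 → ∫ y, p y ∂ν ≤ ∫ y, p y ∂lam → lam = ρ := by
    rintro lam ⟨hP, hlD, hlle⟩ hlS hlp
    have hkey : ∀ i, ∀ b : Euc d →ᵃ[ℝ] ℝ, (∀ y ∈ D, 0 ≤ b y) →
        ∫ y in L i, b y ∂lam ≤ ∫ y in L i, b y ∂ν := fun i b hb =>
      cell_key hD ν lam hνD hlD hlle p hpc hpconv hlp (A i) b (hAp i) hb (L i) (hLm i) (hLD i)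
    have hmassle : ∀ i ∈ J, lam.real (L i) ≤ ν.real (L i) := by
      intro i _
      simpa using hkey i (AffineMap.const ℝ _ 1) (by simp)
    have hmass : ∀ i ∈ J, lam.real (L i) = ν.real (L i) := by
      have h1 := hsumle lam hP hlD (fun _ => 1) continuous_const (by simp)
      have h2 := hsumν (fun _ => 1) continuous_const
      simp at h1 h2
      exact (Finset.sum_eq_sum_iff_of_le hmassle).1
        (le_antisymm (Finset.sum_le_sum hmassle) (h2.le.trans h1))
    have haffle : ∀ i ∈ J, ∀ b : Euc d →ᵃ[ℝ] ℝ,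
        ∫ y in L i, b y ∂lam ≤ ∫ y in L i, b y ∂ν := by
      intro i hi b
      obtain ⟨C, hC⟩ := hbdd _ (aff_continuous (-b))
      have h1 := hkey i (b + AffineMap.const ℝ _ C) (by
        intro y hy
        have := hC y hy
        simp at this ⊢
        linarith)
      simp only [AffineMap.coe_add, AffineMap.coe_const, Pi.add_apply, Function.const_apply] at h1
      rw [integral_add (integrable_of_cont hD lam hlD (aff_continuous b)).restrict
        (integrable_const _),
        integral_add (integrable_of_cont hD ν hνD (aff_continuous b)).restrict
        (integrable_const _)] at h1
      simp only [integral_const, measureReal_restrict_apply_univ, smul_eq_mul, hmass i hi] at h1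
      linarith
    have haff : ∀ i ∈ J, ∀ b : Euc d →ᵃ[ℝ] ℝ,
        ∫ y in L i, b y ∂lam = ∫ y in L i, b y ∂ν := by
      intro i hi b
      have h1 := haffle i hi b
      have h2 := haffle i hi (-b)
      simp only [AffineMap.coe_neg, Pi.neg_apply, integral_neg] at h2
      linarith
    refine eq_of_atoms lam ρ hfin hlS hSρ fun s hs => ?_
    obtain ⟨i, hi, hsi⟩ := hcover s (hSD hs)
    have hT : ∀ t ∈ S ∩ L i, t ∈ msupport (ρ.restrict (L i)) := by
      rintro t ⟨ht, hti⟩ U hU h0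
      apply atom_of_finite ρ hSρ hfin ht
      have h1 : ρ.restrict (L i) {t} = 0 :=
        measure_mono_null (singleton_subset_iff.2 (mem_of_mem_nhds hU)) h0
      rwa [Measure.restrict_apply (measurableSet_singleton t),
        inter_eq_left.2 (singleton_subset_iff.2 hti)] at h1
    obtain ⟨b, hbs, hb⟩ := aff_coord (hcell i (hJ i hi)).2 (hT s ⟨hs, hsi⟩)
    have hb' : ∀ t ∈ S ∩ L i, t ≠ s → b t = 0 := fun t ht => hb t (hT t ht)
    rw [← integral_on_atoms lam hlS (hLm i) hsi b hbs hb',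
      ← integral_on_atoms ρ hSρ (hLm i) hsi b hbs hb', haff i hi b,
      aff_order_eq hD ν ρ hνD hρD (L i) (hcell i (hJ i hi)).1 b]
  let δ : Euc d → ℝ := fun y => Metric.infDist y S
  have hδl : LipschitzWith 1 δ := Metric.lipschitz_infDist_pt S
  have hδc : Continuous δ := hδl.continuous
  refine ⟨K + 1, fun y => p y - δ y, (hK.sub hδl).lipschitzOnWith, ?_⟩
  intro lam hlam hne
  haveI := hlam.1
  have hpl := integrable_of_cont hD lam hlam.2.1 hpc
  have hpr := integrable_of_cont hD ρ hρD hpc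
  have hdl := integrable_of_cont hD lam hlam.2.1 hδc
  have hdr := integrable_of_cont hD ρ hρD hδc
  have hδ0 : 0 ≤ δ := fun y => Metric.infDist_nonneg
  have hδρ : ∫ y, δ y ∂ρ = 0 := by
    rw [integral_eq_zero_iff_of_nonneg hδ0 hdr]
    have hae : ∀ᵐ y ∂ρ, y ∈ S := by simpa [mem_ae_iff] using hSρ
    filter_upwards [hae] with y hy
    exact Metric.infDist_zero_of_mem hy
  rw [integral_sub hpl hdl, integral_sub hpr hdr, hδρ]
  by_contra hcon
  push Not at hcon
  have hd0 : 0 ≤ ∫ y, δ y ∂lam := integral_nonneg hδ0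
  have hle := hlam.2.2 p hpconv (integrable_of_cont hD ν hνD hpc) hpl
  apply hne
  refine huniq lam hlam ?_ (by linarith)
  have hdz : ∫ y, δ y ∂lam = 0 := by linarith
  rw [integral_eq_zero_iff_of_nonneg hδ0 hdl] at hdz
  have : ∀ᵐ y ∂lam, y ∈ S := by
    filter_upwards [hdz] with y hy
    exact (hSclosed.mem_iff_infDist_zero hSne).2 hy
  simpa [mem_ae_iff] using this
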